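/- Let (a_n) and (c_n) be sequences of real numbers with c_n > a_n > 1 for all n, a_n → ∞, and c_n/a_n → ∞ as n → ∞. Set b_n = arcosh((cosh(a_n)·cosh(c_n) + 1)/(sinh(a_n)·sinh(c_n))). Then e^{a_n}·b_n → 2 as n → ∞. -/

import Mathlib

open Filter Topology

/-- The inverse hyperbolic cosine, for `x ≥ 1`. -/
noncomputable def arcosh (x : ℝ) : ℝ := Real.log (x + Real.sqrt (x ^ 2 - 1))

/-!
The perpendicular dropped from the ideal vertex onto the side `b` cuts the pentagon into two
quadrilaterals, each with three right angles and an ideal vertex. In such a quadrilateral the sides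
`x`, `y` between right angles satisfy `sinh x * sinh y = 1`, so `b` is exactly the sum of a
contribution of `a` alone and a contribution of `c` alone; the addition formula for `cosh` turns
this into the pentagon relation. The contribution of a side `x` is asymptotic to `2 * exp (-x)`, so
that of `c` is negligible as soon as `c - a → ∞`.
-/

open Asymptotics

lemma tendsto_sub_atTop_of_tendsto_div_atTop {ι K : Type*} [Field K] [LinearOrder K]
    [IsStrictOrderedRing K] {l : Filter ι} {f g : ι → K} (hf : Tendsto f l atTop)
    (hgf : Tendsto (fun i => g i / f i) l atTop) :
    Tendsto (fun i => g i - f i) l atTop := by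
  have hmul : Tendsto (fun i => f i * (g i / f i + -1)) l atTop :=
    hf.atTop_mul_atTop₀ (tendsto_atTop_add_const_right _ _ hgf)
  refine hmul.congr' ?_
  filter_upwards [hf.eventually_ne_atTop 0] with i hi
  field_simp
  ring

lemma isEquivalent_sinh_atTop : Real.sinh ~[atTop] fun x => Real.exp x / 2 := by
  have hdiff : Real.sinh - (fun x => Real.exp x / 2) = fun x => -(Real.exp (-x) / 2) := by
    ext x
    simp only [Pi.sub_apply, Real.sinh_eq]
    ring
  have hneg : Tendsto (fun x => -(Real.exp (-x) / 2)) atTop (𝓝 0) := by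
    simpa using (Real.tendsto_exp_neg_atTop_nhds_zero.div_const 2).neg
  refine IsLittleO.isEquivalent ?_
  rw [hdiff]
  exact hneg.isBigO_one ℝ |>.trans_isLittleO <| isLittleO_const_left.2 <| .inr <|
    tendsto_norm_atTop_atTop.comp (Real.tendsto_exp_atTop.atTop_div_const two_pos)

lemma isEquivalent_arsinh : Real.arsinh ~[𝓝 0] id := by
  simpa using! (Real.hasDerivAt_arsinh 0).isLittleO

/-- The side `y` of a hyperbolic quadrilateral with three right angles and one ideal vertex, as a
function of the other finite side `x > 0`: the positive solution of `sinh x * sinh y = 1`. -/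
noncomputable def lambertSide (x : ℝ) : ℝ := Real.arsinh (Real.sinh x)⁻¹

lemma lambertSide_nonneg {x : ℝ} (hx : 0 ≤ x) : 0 ≤ lambertSide x :=
  Real.arsinh_nonneg_iff.2 (inv_nonneg.2 (Real.sinh_nonneg_iff.2 hx))

lemma sinh_lambertSide (x : ℝ) : Real.sinh (lambertSide x) = (Real.sinh x)⁻¹ :=
  Real.sinh_arsinh _

lemma cosh_lambertSide {x : ℝ} (hx : 0 < x) :
    Real.cosh (lambertSide x) = Real.cosh x / Real.sinh x := by
  have hs : 0 < Real.sinh x := Real.sinh_pos_iff.2 hx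
  have hsq : 1 + (Real.sinh x)⁻¹ ^ 2 = (Real.cosh x / Real.sinh x) ^ 2 := by
    rw [div_pow, Real.cosh_sq]
    field_simp
  rw [lambertSide, Real.cosh_arsinh, hsq, Real.sqrt_sq (div_nonneg (Real.cosh_pos x).le hs.le)]

lemma cosh_lambertSide_add_lambertSide {x y : ℝ} (hx : 0 < x) (hy : 0 < y) :
    Real.cosh (lambertSide x + lambertSide y) =
      (Real.cosh x * Real.cosh y + 1) / (Real.sinh x * Real.sinh y) := by
  rw [Real.cosh_add, cosh_lambertSide hx, cosh_lambertSide hy, sinh_lambertSide, sinh_lambertSide,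
    div_mul_div_comm, ← mul_inv, ← one_div, ← add_div]

lemma isEquivalent_lambertSide_atTop : lambertSide ~[atTop] fun x => 2 * Real.exp (-x) := by
  have hinv : (fun x => (Real.sinh x)⁻¹) ~[atTop] fun x => 2 * Real.exp (-x) := by
    convert! isEquivalent_sinh_atTop.inv using 2 with x
    simp [Real.exp_neg, div_eq_mul_inv]
  have hzero : Tendsto (fun x => (Real.sinh x)⁻¹) atTop (𝓝 0) :=
    hinv.symm.tendsto_nhds (by simpa using Real.tendsto_exp_neg_atTop_nhds_zero.const_mul 2)
  exact (isEquivalent_arsinh.comp_tendsto hzero).trans hinv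

lemma tendsto_exp_mul_lambertSide :
    Tendsto (fun x => Real.exp x * lambertSide x) atTop (𝓝 2) := by
  have hequiv : (fun x => Real.exp x * lambertSide x) ~[atTop]
      fun x => Real.exp x * (2 * Real.exp (-x)) :=
    IsEquivalent.refl.mul isEquivalent_lambertSide_atTop
  refine hequiv.symm.tendsto_nhds (tendsto_const_nhds.congr fun x => ?_)
  rw [mul_left_comm, ← Real.exp_add, add_neg_cancel, Real.exp_zero, mul_one]

lemma arcosh_cosh {x : ℝ} (hx : 0 ≤ x) : arcosh (Real.cosh x) = x :=
  Real.arcosh_cosh hx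

lemma arcosh_pentagon_eq_lambertSide_add {a c : ℝ} (ha : 0 < a) (hc : 0 < c) :
    arcosh ((Real.cosh a * Real.cosh c + 1) / (Real.sinh a * Real.sinh c)) =
      lambertSide a + lambertSide c := by
  rw [← cosh_lambertSide_add_lambertSide ha hc,
    arcosh_cosh (add_nonneg (lambertSide_nonneg ha.le) (lambertSide_nonneg hc.le))]

theorem small_side_lemma_general {ι : Type*} {l : Filter ι} {a c : ι → ℝ}
    (ha : Tendsto a l atTop) (hca : Tendsto (fun i => c i - a i) l atTop) :
    Tendsto (fun i =>
        Real.exp (a i) *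
          arcosh ((Real.cosh (a i) * Real.cosh (c i) + 1) /
            (Real.sinh (a i) * Real.sinh (c i))))
      l (𝓝 2) := by
  have hc : Tendsto c l atTop := by simpa using hca.atTop_add_atTop ha
  have hsum : Tendsto (fun i => Real.exp (a i) * lambertSide (a i) +
      Real.exp (-(c i - a i)) * (Real.exp (c i) * lambertSide (c i))) l (𝓝 2) := by
    simpa using (tendsto_exp_mul_lambertSide.comp ha).add
      ((Real.tendsto_exp_neg_atTop_nhds_zero.comp hca).mul
        (tendsto_exp_mul_lambertSide.comp hc))
  refine hsum.congr' ?_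
  filter_upwards [ha.eventually_gt_atTop 0, hc.eventually_gt_atTop 0] with i hai hci
  rw [arcosh_pentagon_eq_lambertSide_add hai hci, mul_add, ← mul_assoc, ← Real.exp_add,
    neg_sub, sub_add_cancel]

/-- The small-side lemma (Lemma 8.3): if `c_n > a_n > 1`, `a_n → ∞` and
`c_n / a_n → ∞`, then `b_n = 2 e^{-a_n} + o(e^{-a_n})`, i.e.
`e^{a_n} b_n → 2`, where `cosh b_n = (cosh a_n cosh c_n + 1)/(sinh a_n sinh c_n)`. -/
theorem small_side_lemma (a c : ℕ → ℝ)
    (h : ∀ n, 1 < a n ∧ a n < c n)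
    (ha : Tendsto a atTop atTop)
    (hca : Tendsto (fun n => c n / a n) atTop atTop) :
    Tendsto (fun n =>
        Real.exp (a n) *
          arcosh ((Real.cosh (a n) * Real.cosh (c n) + 1) /
            (Real.sinh (a n) * Real.sinh (c n))))
      atTop (𝓝 2) :=
  small_side_lemma_general ha (tendsto_sub_atTop_of_tendsto_div_atTop ha hca)
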